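/- (Mutual recursion for relational contracts, Coq lemma used in recursion_relational.) Let ψ be a procedure environment and Φ a relational contract environment. If for every procedure environment ψ', ψ' ⊨ Φ implies that for every nonempty sequence of procedure names (y_k)_{k=1}^n the relational Hoare triple ψ' ⊨ {pre_Φ((y_k))} (ψ(y_k))_{k=1}^n {post_Φ((y_k))} holds (i.e., the sequence of bodies taken from ψ satisfies the relational contract when executed under ψ'), then ψ ⊨ Φ. -/

import Mathlib

/-- Memory states: location `x_i` holds value `σ i`. -/
abbrev Mem : Type := ℕ → ℕ

/-- Update `σ[i/n]`: maps `i` to `n` and agrees with `σ` elsewhere. -/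
def Mem.update (σ : Mem) (i n : ℕ) : Mem := fun j => if j = i then n else σ j

inductive Aop : Type
  | add | mul | sub

def Aop.eval : Aop → ℕ → ℕ → ℕ
  | .add => fun m n => m + n
  | .mul => fun m n => m * n
  | .sub => fun m n => m - n

/-- Arithmetic expressions. -/
inductive Aexp : Type
  | const : ℕ → Aexp
  | loc : ℕ → Aexp
  | deref : ℕ → Aexp
  | addr : ℕ → Aexp
  | binop : Aop → Aexp → Aexp → Aexp

def Aexp.eval : Aexp → Mem → ℕ
  | .const n, _ => n
  | .loc i, σ => σ i
  | .deref i, σ => σ (σ i)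
  | .addr i, _ => i
  | .binop o a1 a2, σ => o.eval (a1.eval σ) (a2.eval σ)

inductive Bcmp : Type
  | le | lt | eq

def Bcmp.eval : Bcmp → ℕ → ℕ → Bool
  | .le => fun m n => decide (m ≤ n)
  | .lt => fun m n => decide (m < n)
  | .eq => fun m n => decide (m = n)

/-- Boolean expressions. -/
inductive Bexp : Type
  | tt : Bexp
  | ff : Bexp
  | cmp : Bcmp → Aexp → Aexp → Bexp
  | and : Bexp → Bexp → Bexp
  | or : Bexp → Bexp → Bexp
  | not : Bexp → Bexp

def Bexp.eval : Bexp → Mem → Bool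
  | .tt, _ => true
  | .ff, _ => false
  | .cmp o a1 a2, σ => o.eval (a1.eval σ) (a2.eval σ)
  | .and b1 b2, σ => b1.eval σ && b2.eval σ
  | .or b1 b2, σ => b1.eval σ || b2.eval σ
  | .not b, σ => !(b.eval σ)

/-- Commands, over a type `Y` of procedure names. -/
inductive Com (Y : Type) : Type
  | skip : Com Y
  | assign : ℕ → Aexp → Com Y                      -- x_i := a
  | store : ℕ → Aexp → Com Y                       -- *x_i := a
  | seq : Com Y → Com Y → Com Y
  | assert : (Mem → Prop) → Com Y
  | cond : Bexp → Com Y → Com Y → Com Y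
  | while : Bexp → (Mem → Prop) → Com Y → Com Y
  | call : Y → Com Y

/-- Big-step operational semantics `⟨c, σ⟩ →_ψ σ'`. -/
inductive BigStep {Y : Type} (ψ : Y → Com Y) : Com Y → Mem → Mem → Prop
  | skip (σ : Mem) : BigStep ψ .skip σ σ
  | assign (i : ℕ) (a : Aexp) (σ : Mem) :
      BigStep ψ (.assign i a) σ (σ.update i (a.eval σ))
  | store (i : ℕ) (a : Aexp) (σ : Mem) :
      BigStep ψ (.store i a) σ (σ.update (σ i) (a.eval σ))
  | seq {c1 c2 : Com Y} {σ σ'' σ' : Mem} :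
      BigStep ψ c1 σ σ'' → BigStep ψ c2 σ'' σ' → BigStep ψ (.seq c1 c2) σ σ'
  | assert (P : Mem → Prop) (σ : Mem) : BigStep ψ (.assert P) σ σ
  | condTrue {b : Bexp} {c1 c2 : Com Y} {σ σ' : Mem} :
      b.eval σ = true → BigStep ψ c1 σ σ' → BigStep ψ (.cond b c1 c2) σ σ'
  | condFalse {b : Bexp} {c1 c2 : Com Y} {σ σ' : Mem} :
      b.eval σ = false → BigStep ψ c2 σ σ' → BigStep ψ (.cond b c1 c2) σ σ'
  | whileTrue {b : Bexp} {I : Mem → Prop} {c : Com Y} {σ σ'' σ' : Mem} :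
      b.eval σ = true → BigStep ψ c σ σ'' → BigStep ψ (.while b I c) σ'' σ' →
      BigStep ψ (.while b I c) σ σ'
  | whileFalse {b : Bexp} {I : Mem → Prop} {c : Com Y} {σ : Mem} :
      b.eval σ = false → BigStep ψ (.while b I c) σ σ
  | call {y : Y} {σ σ' : Mem} : BigStep ψ (ψ y) σ σ' → BigStep ψ (.call y) σ σ'

/-- Hoare triple `ψ ⊨ {P} c {Q}`. -/
def HoareTriple {Y : Type} (ψ : Y → Com Y) (P : Mem → Prop) (c : Com Y)
    (Q : Mem → Mem → Prop) : Prop :=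
  ∀ σ σ' : Mem, P σ → BigStep ψ c σ σ' → Q σ σ'

/-- A contract: a precondition and a postcondition. -/
abbrev Contract : Type := (Mem → Prop) × (Mem → Mem → Prop)

/-- Contract validity `ψ ⊨ φ`. -/
def ContractValid {Y : Type} (ψ : Y → Com Y) (φ : Y → Contract) : Prop :=
  ∀ y : Y, HoareTriple ψ (φ y).1 (.call y) (φ y).2

/-- Pointwise big-step execution of a sequence of commands. -/
inductive BigSteps {Y : Type} (ψ : Y → Com Y) : List (Com Y) → List Mem → List Mem → Prop
  | nil : BigSteps ψ [] [] []
  | cons {c : Com Y} {cs : List (Com Y)} {σ σ' : Mem} {σs σs' : List Mem} :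
      BigStep ψ c σ σ' → BigSteps ψ cs σs σs' →
      BigSteps ψ (c :: cs) (σ :: σs) (σ' :: σs')

/-- Relational Hoare triple `ψ ⊨ {P} (c_k) {Q}`. -/
def RHoare {Y : Type} (ψ : Y → Com Y) (P : List Mem → Prop) (cs : List (Com Y))
    (Q : List Mem → List Mem → Prop) : Prop :=
  ∀ σs σs' : List Mem, P σs → BigSteps ψ cs σs σs' → Q σs σs'

/-- A relational contract: a relational precondition and postcondition. -/
abbrev RContract : Type := (List Mem → Prop) × (List Mem → List Mem → Prop)

/-- Relational contract validity `ψ ⊨ Φ`. -/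
def RContractValid {Y : Type} (ψ : Y → Com Y) (Φ : List Y → RContract) : Prop :=
  ∀ ys : List Y, ys ≠ [] → RHoare ψ (Φ ys).1 (ys.map Com.call) (Φ ys).2

/-- Optimized main VC function `Tc`. -/
def Tc {Y : Type} : Com Y → Mem → Mem → (Y → Contract) → (Prop → Prop) → Prop
  | .skip, σ, σ', _, f => f (σ = σ')
  | .assign i a, σ, σ', _, f => f (σ' = σ.update i (a.eval σ))
  | .store i a, σ, σ', _, f => f (σ' = σ.update (σ i) (a.eval σ))
  | .assert P', σ, σ', _, f => f (P' σ ∧ σ = σ')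
  | .seq c0 c1, σ, σ', φ, f =>
      ∀ σ'' : Mem, Tc c0 σ σ'' φ (fun p1 => Tc c1 σ'' σ' φ (fun p2 => f (p1 ∧ p2)))
  | .cond b c0 c1, σ, σ', φ, f =>
      Tc c0 σ σ' φ (fun p1 => Tc c1 σ σ' φ (fun p2 =>
        f ((b.eval σ = true → p1) ∧ (b.eval σ = false → p2))))
  | .call y, σ, σ', φ, f => f ((φ y).1 σ ∧ (φ y).2 σ σ')
  | .while b I _, σ, σ', _, f => f (I σ ∧ I σ' ∧ b.eval σ' = false)

/-- Optimized auxiliary VC function `Ta`. -/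
def Ta {Y : Type} : Com Y → Mem → (Y → Contract) → Prop
  | .skip, _, _ => True
  | .assign _ _, _, _ => True
  | .store _ _, _, _ => True
  | .assert P', σ, _ => P' σ
  | .seq c0 c1, σ, φ =>
      Ta c0 σ φ ∧ ∀ σ' : Mem, Tc c0 σ σ' φ (fun p => p → Ta c1 σ' φ)
  | .cond b c0 c1, σ, φ =>
      (b.eval σ = true → Ta c0 σ φ) ∧ (b.eval σ = false → Ta c1 σ φ)
  | .call y, σ, φ => (φ y).1 σ
  | .while b I c, σ, φ =>
      I σ ∧ (∀ σ' : Mem, I σ' → b.eval σ' = true → Ta c σ' φ) ∧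
      (∀ σ' σ'' : Mem, I σ' → Tc c σ' σ'' φ (fun p => p → I σ''))

/-- Optimized procedure VC `Tf`. -/
def Tf {Y : Type} (φ : Y → Contract) (ψ : Y → Com Y) : Prop :=
  ∀ (y : Y) (σ σ' : Mem), (φ y).1 σ →
    Ta (ψ y) σ φ ∧ Tc (ψ y) σ σ' φ (fun p => p → (φ y).2 σ σ')

/-- Naive main VC function `Tcⁿ`. -/
def Tcn {Y : Type} : Com Y → Mem → (Y → Contract) → (Mem → Prop) → Prop
  | .skip, σ, _, P => P σ
  | .assign i a, σ, _, P => P (σ.update i (a.eval σ))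
  | .store i a, σ, _, P => P (σ.update (σ i) (a.eval σ))
  | .assert P', σ, _, P => P' σ → P σ
  | .seq c0 c1, σ, φ, P => Tcn c0 σ φ (fun σ'' => Tcn c1 σ'' φ P)
  | .cond b c0 c1, σ, φ, P =>
      (b.eval σ = true → Tcn c0 σ φ P) ∧ (b.eval σ = false → Tcn c1 σ φ P)
  | .call y, σ, φ, P => ∀ σ' : Mem, (φ y).1 σ ∧ (φ y).2 σ σ' → P σ'
  | .while b I _, σ, _, P => ∀ σ' : Mem, I σ ∧ I σ' ∧ b.eval σ' = false → P σ'

/-- Naive auxiliary VC function `Taⁿ`. -/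
def Tan {Y : Type} : Com Y → Mem → (Y → Contract) → Prop
  | .skip, _, _ => True
  | .assign _ _, _, _ => True
  | .store _ _, _, _ => True
  | .assert P', σ, _ => P' σ
  | .seq c0 c1, σ, φ => Tan c0 σ φ ∧ Tcn c0 σ φ (fun σ' => Tan c1 σ' φ)
  | .cond b c0 c1, σ, φ =>
      (b.eval σ = true → Tan c0 σ φ) ∧ (b.eval σ = false → Tan c1 σ φ)
  | .call y, σ, φ => (φ y).1 σ
  | .while b I c, σ, φ =>
      I σ ∧ (∀ σ' : Mem, I σ' → b.eval σ' = true → Tan c σ' φ ∧ Tcn c σ' φ I)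

/-- Naive procedure VC `Tfⁿ`. -/
def Tfn {Y : Type} (φ : Y → Contract) (ψ : Y → Com Y) : Prop :=
  ∀ (y : Y) (σ : Mem), (φ y).1 σ →
    Tan (ψ y) σ φ ∧ Tcn (ψ y) σ φ (fun σ' => (φ y).2 σ σ')

/-- Relational VC function `Tr` (recursion over the sequence of commands). -/
def Tr {Y : Type} : List (Com Y) → List Mem → List Mem → (Y → Contract) →
    (Prop → Prop) → Prop
  | [], [], [], _, f => f True
  | c :: cs, σ :: σs, σ' :: σs', φ, f =>
      Tc c σ σ' φ (fun pn => Tr cs σs σs' φ (fun pm => f (pn ∧ pm)))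
  | _, _, _, _, _ => True

/-- Relational auxiliary VC function `Ta_r`. -/
def Tar {Y : Type} : List (Com Y) → List Mem → (Y → Contract) → Prop
  | [], [], _ => True
  | c :: cs, σ :: σs, φ => Ta c σ φ ∧ Tar cs σs φ
  | _, _, _ => True

/-- `Proccall(y, σ, σ', ψ)`. -/
def Proccall {Y : Type} (y : Y) (σ σ' : Mem) (ψ : Y → Com Y) : Prop :=
  BigStep ψ (.call y) σ σ'

/-- `Procpred`: all the calls of the sequence have taken place. -/
def Procpred {Y : Type} (ψ : Y → Com Y) : List Y → List Mem → List Mem → Prop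
  | [], [], [] => True
  | y :: ys, σ :: σs, σ' :: σs' => Proccall y σ σ' ψ ∧ Procpred ψ ys σs σs'
  | _, _, _ => False

/-- `Tpr`: translation of the relational contracts into a logical formula. -/
def Tpr {Y : Type} (Φ : List Y → RContract) (ψ : Y → Com Y) : Prop :=
  ∀ (ys : List Y) (σs σs' : List Mem), ys ≠ [] →
    Procpred ψ ys σs σs' → (Φ ys).1 σs → (Φ ys).2 σs σs'

/-- `Φcall`: reduce singleton relational contracts to standard contracts with
tracked calls. -/
def Phicall {Y : Type} (Φ : List Y → RContract) (ψ : Y → Com Y) : Y → Contract :=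
  fun y =>
    (fun σ => (Φ [y]).1 [σ],
     fun σ σ' => (Φ [y]).2 [σ] [σ'] ∧ Proccall y σ σ' ψ)

/-- Relational procedure VC `Tf_r`. -/
def Tfr {Y : Type} (Φ : List Y → RContract) (ψ : Y → Com Y) : Prop :=
  ∀ (ys : List Y) (σs σs' : List Mem) (ψ' : Y → Com Y),
    (Φ ys).1 σs → Tpr Φ ψ' →
    Tar (ys.map ψ) σs (Phicall Φ ψ') ∧
    Tr (ys.map ψ) σs σs' (Phicall Φ ψ')
      (fun p => p → (Φ ys).2 σs σs')

/-- The recursive summation command `c_sum`. -/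
def csum : Com Unit :=
  .cond (.cmp .lt (.loc 1) (.loc 2))
    (.seq (.assign 3 (.binop .add (.loc 3) (.loc 1)))
      (.seq (.assign 1 (.binop .add (.loc 1) (.const 1)))
        (.call ())))
    .skip

/-- The procedure environment binding `y_sum` to `c_sum`. -/
def psum : Unit → Com Unit := fun _ => csum

/-- Replace each call by a command. -/
def Com.inl {Y : Type} (f : Y → Com Y) : Com Y → Com Y
  | .skip => .skip
  | .assign i a => .assign i a
  | .store i a => .store i a
  | .seq c d => .seq (Com.inl f c) (Com.inl f d)
  | .assert P => .assert P
  | .cond b c d => .cond b (Com.inl f c) (Com.inl f d)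
  | .while b I c => .while b I (Com.inl f c)
  | .call y => f y

/-- Call-free commands. -/
def Com.NoCall {Y : Type} : Com Y → Prop
  | .skip => True
  | .assign _ _ => True
  | .store _ _ => True
  | .seq c d => Com.NoCall c ∧ Com.NoCall d
  | .assert _ => True
  | .cond _ c d => Com.NoCall c ∧ Com.NoCall d
  | .while _ _ c => Com.NoCall c
  | .call _ => False

theorem noCall_inl {Y : Type} {f : Y → Com Y} (hf : ∀ y, (f y).NoCall) (c : Com Y) :
    (c.inl f).NoCall := by
  induction c <;> simp_all [Com.inl, Com.NoCall]

theorem BigStep.change {Y : Type} {f g : Y → Com Y} {c : Com Y} {σ σ' : Mem}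
    (h : BigStep f c σ σ') (hc : c.NoCall) : BigStep g c σ σ' := by
  induction h with
  | skip => exact .skip _
  | assign => exact .assign _ _ _
  | store => exact .store _ _ _
  | seq _ _ i1 i2 => exact .seq (i1 hc.1) (i2 hc.2)
  | assert => exact .assert _ _
  | condTrue hb _ i => exact .condTrue hb (i hc.1)
  | condFalse hb _ i => exact .condFalse hb (i hc.2)
  | whileTrue hb _ _ i1 i2 => exact .whileTrue hb (i1 hc) (i2 hc)
  | whileFalse hb => exact .whileFalse hb
  | call => exact hc.elim

theorem BigStep.to_inl {Y : Type} {f g : Y → Com Y} (hf : ∀ y, (f y).NoCall)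
    {c : Com Y} {σ σ' : Mem} (h : BigStep f c σ σ') : BigStep g (c.inl f) σ σ' := by
  induction h with
  | skip => exact .skip _
  | assign => exact .assign _ _ _
  | store => exact .store _ _ _
  | seq _ _ i1 i2 => exact .seq i1 i2
  | assert => exact .assert _ _
  | condTrue hb _ i => exact .condTrue hb i
  | condFalse hb _ i => exact .condFalse hb i
  | whileTrue hb _ _ i1 i2 => exact .whileTrue hb i1 i2
  | whileFalse hb => exact .whileFalse hb
  | call h _ => exact h.change (hf _)

theorem BigStep.while_mono {Y : Type} {f g : Y → Com Y} {b : Bexp} {I : Mem → Prop}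
    {c d : Com Y} (hcd : ∀ σ σ', BigStep g c σ σ' → BigStep f d σ σ') {e : Com Y} {σ σ' : Mem}
    (h : BigStep g e σ σ') (he : e = .while b I c) : BigStep f (.while b I d) σ σ' := by
  induction h with
  | whileTrue hb h1 _ _ i2 =>
    cases he
    exact .whileTrue hb (hcd _ _ h1) (i2 rfl)
  | whileFalse hb => cases he; exact .whileFalse hb
  | _ => cases he

theorem BigStep.of_inl {Y : Type} {f g : Y → Com Y} (hf : ∀ y, (f y).NoCall)
    (c : Com Y) : ∀ σ σ' : Mem, BigStep g (c.inl f) σ σ' → BigStep f c σ σ' := by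
  induction c with
  | skip => intro σ σ' h; exact h.change trivial
  | assign => intro σ σ' h; exact h.change trivial
  | store => intro σ σ' h; exact h.change trivial
  | assert => intro σ σ' h; exact h.change trivial
  | seq c d i1 i2 =>
    intro σ σ' h
    cases h with
    | seq h1 h2 => exact .seq (i1 _ _ h1) (i2 _ _ h2)
  | cond b c d i1 i2 =>
    intro σ σ' h
    cases h with
    | condTrue hb h => exact .condTrue hb (i1 _ _ h)
    | condFalse hb h => exact .condFalse hb (i2 _ _ h)
  | call y => intro σ σ' h; exact .call (BigStep.change h (hf y))
  | _ b I c i => intro σ σ' h; exact BigStep.while_mono i h rfl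

/-- Finite unfoldings of the environment. -/
def unfoldEnv {Y : Type} (ψ : Y → Com Y) : ℕ → Y → Com Y
  | 0 => fun _ => .while .tt (fun _ => True) .skip
  | k + 1 => fun y => (ψ y).inl (unfoldEnv ψ k)

theorem noCall_unfoldEnv {Y : Type} (ψ : Y → Com Y) (k : ℕ) :
    ∀ y, (unfoldEnv ψ k y).NoCall := by
  induction k with
  | zero => intro y; exact trivial
  | succ k ih => intro y; exact noCall_inl ih _

theorem BigStep.diverge {Y : Type} {g : Y → Com Y} {I : Mem → Prop} {c e : Com Y}
    {σ σ' : Mem} (h : BigStep g e σ σ') (he : e = .while .tt I c) : False := by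
  induction h with
  | whileTrue _ _ _ _ i2 => exact i2 he
  | whileFalse hb => cases he; simp [Bexp.eval] at hb
  | _ => cases he

theorem BigStep.to_unfold {Y : Type} {ψ : Y → Com Y} {c : Com Y} {σ σ' : Mem}
    (h : BigStep ψ c σ σ') : ∃ k, ∀ m, k ≤ m → BigStep (unfoldEnv ψ m) c σ σ' := by
  induction h with
  | skip => exact ⟨0, fun _ _ => .skip _⟩
  | assign => exact ⟨0, fun _ _ => .assign _ _ _⟩
  | store => exact ⟨0, fun _ _ => .store _ _ _⟩
  | assert => exact ⟨0, fun _ _ => .assert _ _⟩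
  | seq _ _ i1 i2 =>
    obtain ⟨k, hk⟩ := i1
    obtain ⟨l, hl⟩ := i2
    exact ⟨k + l, fun m hm => .seq (hk m (by omega)) (hl m (by omega))⟩
  | condTrue hb _ i =>
    obtain ⟨k, hk⟩ := i
    exact ⟨k, fun m hm => .condTrue hb (hk m hm)⟩
  | condFalse hb _ i =>
    obtain ⟨k, hk⟩ := i
    exact ⟨k, fun m hm => .condFalse hb (hk m hm)⟩
  | whileTrue hb _ _ i1 i2 =>
    obtain ⟨k, hk⟩ := i1
    obtain ⟨l, hl⟩ := i2
    exact ⟨k + l, fun m hm => .whileTrue hb (hk m (by omega)) (hl m (by omega))⟩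
  | whileFalse hb => exact ⟨0, fun _ _ => .whileFalse hb⟩
  | call _ i =>
    obtain ⟨k, hk⟩ := i
    refine ⟨k + 1, fun m hm => ?_⟩
    obtain ⟨n, rfl⟩ : ∃ n, m = n + 1 := ⟨m - 1, by omega⟩
    exact .call ((hk n (by omega)).to_inl (noCall_unfoldEnv ψ n))

theorem BigSteps.to_unfold {Y : Type} {ψ : Y → Com Y} {cs : List (Com Y)} {σs σs' : List Mem}
    (h : BigSteps ψ cs σs σs') : ∃ k, ∀ m, k ≤ m → BigSteps (unfoldEnv ψ m) cs σs σs' := by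
  induction h with
  | nil => exact ⟨0, fun _ _ => .nil⟩
  | cons h1 _ i2 =>
    obtain ⟨k, hk⟩ := h1.to_unfold
    obtain ⟨l, hl⟩ := i2
    exact ⟨k + l, fun m hm => .cons (hk m (by omega)) (hl m (by omega))⟩

theorem BigSteps.fold {Y : Type} {ψ : Y → Com Y} {k : ℕ} (ys : List Y) :
    ∀ σs σs' : List Mem, BigSteps (unfoldEnv ψ (k + 1)) (ys.map Com.call) σs σs' →
      BigSteps (unfoldEnv ψ k) (ys.map ψ) σs σs' := by
  induction ys with
  | nil => intro σs σs' h; cases h; exact .nil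
  | cons y ys ih =>
    intro σs σs' h
    cases h with
    | cons h1 h2 =>
      cases h1 with
      | call h1 => exact .cons (BigStep.of_inl (noCall_unfoldEnv ψ k) _ _ _ h1) (ih _ _ h2)

/-- Mutual recursion for relational contracts. -/
theorem recursive_rela_proc {Y : Type} (ψ : Y → Com Y) (Φ : List Y → RContract)
    (h : ∀ ψ' : Y → Com Y, RContractValid ψ' Φ →
      ∀ ys : List Y, ys ≠ [] → RHoare ψ' (Φ ys).1 (ys.map ψ) (Φ ys).2) :
    RContractValid ψ Φ := by
  have hv : ∀ k, RContractValid (unfoldEnv ψ k) Φ := by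
    intro k
    induction k with
    | zero =>
      intro ys hys σs σs' _ hs
      cases ys with
      | nil => exact absurd rfl hys
      | cons y ys =>
        cases hs with
        | cons h1 _ =>
          cases h1 with
          | call h1 => exact (BigStep.diverge h1 rfl).elim
    | succ k ih =>
      intro ys hys σs σs' hP hs
      exact h _ ih ys hys σs σs' hP (BigSteps.fold ys _ _ hs)
  intro ys hys σs σs' hP hs
  obtain ⟨k, hk⟩ := hs.to_unfold
  exact hv k ys hys σs σs' hP (hk k le_rfl)
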